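/- arXiv:1912.09784 — 3 statements merged into one kernel-verified Lean document; each statement's English description precedes it below -/
import Mathlib

section
/- In the setting of the optimal-discriminator lemma (σ-finite λ; densities f and g = (1−α)p_g + α p_c with α ∈ (0,1); D*(ω) = f(ω)/(f(ω)+g(ω)) on {f+g > 0} and 1/2 elsewhere; D : Ω → (0,1) measurable with all four integrals f·log D, g·log(1−D), f·log D*, g·log(1−D*) λ-integrable), equality ∫ f·log D dλ + ∫ g·log(1−D) dλ = ∫ f·log D* dλ + ∫ g·log(1−D*) dλ holds if and only if D = D* λ-almost everywhere on the set {ω : f(ω) + g(ω) > 0}. -/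
/-!
The objective is maximised pointwise. For `a, b ≥ 0` with `a + b > 0` put `t = a / (a + b)`. The
tangent-line bound `log x ≤ x - 1`, applied at `x = y / t` and at `x = (1 - y) / (1 - t)`, gives
`a log y ≤ a log t + ((a + b) y - a)` and
`b log (1 - y) ≤ b log (1 - t) + ((a + b) (1 - y) - b)`, and the two error terms cancel.
The first bound is strict unless `y = t` (`mul_log_lt_of_ne`). Hence the
difference of the two integrands is nonnegative and vanishes exactly where `f + g = 0` or
`D = Dstar`; being integrable, it has zero integral iff it vanishes almost everywhere.
-/

open MeasureTheory

/-- Scaled tangent-line bound for the logarithm. It includes `a = 0`, where it reads `0 < c * y`,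
so that points at which one of the two densities vanishes need no separate treatment. -/
lemma mul_log_lt_of_ne {a c y : ℝ} (ha : 0 ≤ a) (hc : 0 < c) (hy : 0 < y) (hne : y ≠ a / c) :
    a * Real.log y < a * Real.log (a / c) + (c * y - a) := by
  rcases ha.eq_or_lt with rfl | ha
  · simpa using mul_pos hc hy
  · have ht : 0 < a / c := div_pos ha hc
    have h := Real.log_lt_sub_one_of_pos (div_pos hy ht)
      (fun h => hne ((div_eq_one_iff_eq ht.ne').1 h))
    rw [Real.log_div hy.ne' ht.ne'] at h
    have h2 := mul_lt_mul_of_pos_left h ha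
    have h3 : a * (y / (a / c) - 1) = c * y - a := by field_simp
    linarith

lemma objective_lt_of_ne {a b y : ℝ} (ha : 0 ≤ a) (hb : 0 ≤ b) (hab : 0 < a + b)
    (hy : y ∈ Set.Ioo (0 : ℝ) 1) (hne : y ≠ a / (a + b)) :
    a * Real.log y + b * Real.log (1 - y) <
      a * Real.log (a / (a + b)) + b * Real.log (1 - a / (a + b)) := by
  have hcompl : 1 - a / (a + b) = b / (a + b) := by field_simp; ring
  have h1 := mul_log_lt_of_ne ha hab hy.1 hne
  have h2 := mul_log_lt_of_ne hb hab (sub_pos.2 hy.2)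
    (fun h => hne (by linarith))
  rw [hcompl]
  linarith

/-- Uniqueness part of Lemma 3.1 of Triple-GAN: in the optimal-discriminator setting,
the adversarial objective of a discriminator `D : Ω → (0,1)` equals that of
`Dstar = f / (f + g)` if and only if `D = Dstar` `lam`-almost everywhere on the set
`{ω | f ω + g ω > 0}`. -/
theorem triple_gan_optimal_discriminator_unique
    {Ω : Type*} [MeasurableSpace Ω] (lam : Measure Ω) [SigmaFinite lam]
    (f pg pc : Ω → ℝ)
    (hfm : Measurable f) (hpgm : Measurable pg) (hpcm : Measurable pc)
    (hf0 : ∀ ω, 0 ≤ f ω) (hpg0 : ∀ ω, 0 ≤ pg ω) (hpc0 : ∀ ω, 0 ≤ pc ω)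
    (hf1 : ∫ ω, f ω ∂lam = 1) (hpg1 : ∫ ω, pg ω ∂lam = 1) (hpc1 : ∫ ω, pc ω ∂lam = 1)
    (α : ℝ) (hα : α ∈ Set.Ioo (0 : ℝ) 1)
    (g : Ω → ℝ) (hg : ∀ ω, g ω = (1 - α) * pg ω + α * pc ω)
    (Dstar : Ω → ℝ)
    (hDstar : ∀ ω, Dstar ω = if 0 < f ω + g ω then f ω / (f ω + g ω) else 1 / 2)
    (hint_star₁ : Integrable (fun ω => f ω * Real.log (Dstar ω)) lam)
    (hint_star₂ : Integrable (fun ω => g ω * Real.log (1 - Dstar ω)) lam)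
    (D : Ω → ℝ) (hDm : Measurable D) (hD01 : ∀ ω, D ω ∈ Set.Ioo (0 : ℝ) 1)
    (hint₁ : Integrable (fun ω => f ω * Real.log (D ω)) lam)
    (hint₂ : Integrable (fun ω => g ω * Real.log (1 - D ω)) lam) :
    (∫ ω, f ω * Real.log (D ω) ∂lam + ∫ ω, g ω * Real.log (1 - D ω) ∂lam =
        ∫ ω, f ω * Real.log (Dstar ω) ∂lam + ∫ ω, g ω * Real.log (1 - Dstar ω) ∂lam) ↔
      (∀ᵐ ω ∂lam, 0 < f ω + g ω → D ω = Dstar ω) := by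
  have hg0 : ∀ ω, 0 ≤ g ω := fun ω => by
    rw [hg]
    exact add_nonneg (mul_nonneg (sub_nonneg.2 hα.2.le) (hpg0 ω)) (mul_nonneg hα.1.le (hpc0 ω))
  have key : ∀ ω, 0 < f ω + g ω → D ω ≠ Dstar ω →
      f ω * Real.log (D ω) + g ω * Real.log (1 - D ω) <
        f ω * Real.log (Dstar ω) + g ω * Real.log (1 - Dstar ω) := by
    intro ω hpos hne
    rw [hDstar, if_pos hpos] at hne ⊢
    exact objective_lt_of_ne (hf0 ω) (hg0 ω) hpos (hD01 ω) hne
  have key_eq : ∀ ω, (0 < f ω + g ω → D ω = Dstar ω) →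
      f ω * Real.log (D ω) + g ω * Real.log (1 - D ω) =
        f ω * Real.log (Dstar ω) + g ω * Real.log (1 - Dstar ω) := by
    intro ω h
    by_cases hpos : 0 < f ω + g ω
    · rw [h hpos]
    · have hf : f ω = 0 := by linarith [hf0 ω, hg0 ω]
      have hg' : g ω = 0 := by linarith [hf0 ω, hg0 ω]
      simp [hf, hg']
  have hle : ∀ ω, f ω * Real.log (D ω) + g ω * Real.log (1 - D ω) ≤
      f ω * Real.log (Dstar ω) + g ω * Real.log (1 - Dstar ω) := by
    intro ω
    by_cases h : 0 < f ω + g ω → D ω = Dstar ω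
    · exact (key_eq ω h).le
    · push Not at h
      exact (key ω h.1 h.2).le
  rw [← integral_add hint₁ hint₂, ← integral_add hint_star₁ hint_star₂]
  refine (integral_eq_iff_of_ae_le (hint₁.add hint₂) (hint_star₁.add hint_star₂)
    (Filter.Eventually.of_forall hle)).trans ?_
  refine Filter.eventually_congr (Filter.Eventually.of_forall fun ω => ⟨fun h hpos => ?_, key_eq ω⟩)
  by_contra hne
  exact (key ω hpos hne).ne h
end

section
/- Let (Ω, 𝒜) be a measurable space, λ a σ-finite measure on Ω, and let μ and ν be probability measures on Ω with λ-densities f and g respectively. Assume the functions f·log(f/(f+g)) and g·log(g/(f+g)) (interpreted as 0 where f = 0, resp. g = 0) are λ-integrable. Then ∫ f·log(f/(f+g)) dλ + ∫ g·log(g/(f+g)) dλ = −log 4 + 2·JSD(μ, ν), where JSD(μ, ν) := (1/2)·klDiv(μ, (1/2)(μ+ν)) + (1/2)·klDiv(ν, (1/2)(μ+ν)) (converted to a real number), and klDiv(μ,ν) denotes the Kullback–Leibler divergence of μ from ν (equal to ∫ log(dμ/dν) dμ when μ ≪ ν and the integral exists, and +∞ otherwise). -/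
/-!
With `m = (μ + ν)/2`, the function `2f/(f+g)` is a density of `μ` with respect to `m`: where
`f + g = 0` both `f` and `g` vanish, so dividing by zero does no harm. Hence `μ ≪ m`, and `μ`-almost
everywhere, where `f > 0`, the log-likelihood ratio of `μ` with respect to `m` is
`log 2 + log (f/(f+g))`. Integrating against the probability measure `μ = f·lam` gives
`klDiv μ m = log 2 + ∫ f log (f/(f+g)) dlam` (`klDiv_half_add_eq`). The same holds for `ν` with the
roles of `f` and `g` exchanged, and the sum of the two identities is the theorem.
-/

open MeasureTheory Classical
open scoped ENNReal

/-- Kullback–Leibler divergence of `μ` from `ν`: equal to `∫ log (dμ/dν) dμ` when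
`μ ≪ ν` and that integral exists, and `+∞` otherwise. -/
noncomputable def klDiv {Ω : Type*} [MeasurableSpace Ω] (μ ν : Measure Ω) : EReal :=
  if μ ≪ ν ∧ Integrable (llr μ ν) μ then ((∫ ω, llr μ ν ω ∂μ : ℝ) : EReal) else ⊤

/-- Jensen–Shannon divergence:
`JSD(μ, ν) = (1/2)·klDiv(μ, (1/2)(μ+ν)) + (1/2)·klDiv(ν, (1/2)(μ+ν))`. -/
noncomputable def JSD {Ω : Type*} [MeasurableSpace Ω] (μ ν : Measure Ω) : EReal :=
  ((1 / 2 : ℝ) : EReal) * klDiv μ ((2 : ℝ≥0∞)⁻¹ • (μ + ν)) +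
    ((1 / 2 : ℝ) : EReal) * klDiv ν ((2 : ℝ≥0∞)⁻¹ • (μ + ν))

/-- The density of `μ` with respect to the midpoint measure, obtained from the `lam`-densities. -/
lemma eq_withDensity_half_add {Ω : Type*} [MeasurableSpace Ω] (lam : Measure Ω)
    (f g : Ω → ℝ) (hfm : Measurable f) (hgm : Measurable g)
    (hf0 : ∀ ω, 0 ≤ f ω) (hg0 : ∀ ω, 0 ≤ g ω) (μ ν : Measure Ω)
    (hμ : μ = lam.withDensity fun ω => ENNReal.ofReal (f ω))
    (hν : ν = lam.withDensity fun ω => ENNReal.ofReal (g ω)) :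
    μ = ((2 : ℝ≥0∞)⁻¹ • (μ + ν)).withDensity
      fun ω => ENNReal.ofReal (2 * (f ω / (f ω + g ω))) := by
  have hmid : (2 : ℝ≥0∞)⁻¹ • (μ + ν) =
      lam.withDensity fun ω => ENNReal.ofReal (2⁻¹ * (f ω + g ω)) := by
    rw [hμ, hν, ← withDensity_add_left (by fun_prop), ← withDensity_smul _ (by fun_prop)]
    congr 1
    ext ω
    simp only [Pi.smul_apply, Pi.add_apply, smul_eq_mul]
    rw [ENNReal.ofReal_mul (by norm_num), ENNReal.ofReal_add (hf0 ω) (hg0 ω),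
      ENNReal.ofReal_inv_of_pos (by norm_num)]
    norm_num
  rw [hmid, ← withDensity_mul _ (by fun_prop) (by fun_prop), hμ]
  congr 1
  ext ω
  have hf := hf0 ω
  have hg := hg0 ω
  simp only [Pi.mul_apply]
  rw [← ENNReal.ofReal_mul (by positivity)]
  congr 1
  by_cases h : f ω + g ω = 0
  · have : f ω = 0 := by linarith
    simp [this]
  · field_simp

/-- The divergence of `μ` from the midpoint measure is finite, and is `log 2` plus the
corresponding term of the adversarial value. -/
lemma klDiv_half_add_eq {Ω : Type*} [MeasurableSpace Ω] (lam : Measure Ω)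
    (f g : Ω → ℝ) (hfm : Measurable f) (hgm : Measurable g)
    (hf0 : ∀ ω, 0 ≤ f ω) (hg0 : ∀ ω, 0 ≤ g ω)
    (μ ν : Measure Ω) [IsProbabilityMeasure μ] [IsProbabilityMeasure ν]
    (hμ : μ = lam.withDensity fun ω => ENNReal.ofReal (f ω))
    (hν : ν = lam.withDensity fun ω => ENNReal.ofReal (g ω))
    (hint : Integrable (fun ω => f ω * Real.log (f ω / (f ω + g ω))) lam) :
    klDiv μ ((2 : ℝ≥0∞)⁻¹ • (μ + ν)) =
      ((Real.log 2 + ∫ ω, f ω * Real.log (f ω / (f ω + g ω)) ∂lam : ℝ) : EReal) := by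
  have hdens := eq_withDensity_half_add lam f g hfm hgm hf0 hg0 μ ν hμ hν
  set m := (2 : ℝ≥0∞)⁻¹ • (μ + ν) with hm
  have : IsFiniteMeasure m := Measure.smul_finite _ (by simp)
  have hac : μ ≪ m := by
    rw [hdens]
    exact withDensity_absolutelyContinuous _ _
  have hrn : ∀ᵐ ω ∂m, μ.rnDeriv m ω = ENNReal.ofReal (2 * (f ω / (f ω + g ω))) := by
    have h := Measure.rnDeriv_withDensity m
      (f := fun ω => ENNReal.ofReal (2 * (f ω / (f ω + g ω)))) (by fun_prop)
    rwa [← hdens] at h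
  have hpos : ∀ᵐ ω ∂μ, 0 < f ω := by
    rw [hμ, ae_withDensity_iff (by fun_prop)]
    exact ae_of_all _ fun ω h => by simpa using h
  have hllr : llr μ m =ᵐ[μ] fun ω => Real.log 2 + Real.log (f ω / (f ω + g ω)) := by
    filter_upwards [hac.ae_le hrn, hpos] with ω h1 h2
    have hq : 0 < f ω / (f ω + g ω) := div_pos h2 (add_pos_of_pos_of_nonneg h2 (hg0 ω))
    rw [llr, h1, ENNReal.toReal_ofReal (by positivity), Real.log_mul two_ne_zero hq.ne']
  have hlog : Integrable (fun ω => Real.log (f ω / (f ω + g ω))) μ := by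
    rw [hμ, integrable_withDensity_iff_integrable_smul' (by fun_prop) (by simp)]
    simpa [ENNReal.toReal_ofReal, hf0] using hint
  have hval : ∫ ω, Real.log (f ω / (f ω + g ω)) ∂μ =
      ∫ ω, f ω * Real.log (f ω / (f ω + g ω)) ∂lam := by
    rw [hμ, integral_withDensity_eq_integral_toReal_smul (by fun_prop) (by simp)]
    simp [ENNReal.toReal_ofReal, hf0]
  have hllr_int : Integrable (llr μ m) μ :=
    ((integrable_const _).add hlog).congr hllr.symm
  rw [klDiv, if_pos ⟨hac, hllr_int⟩, integral_congr_ae hllr,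
    integral_add (integrable_const _) hlog, hval]
  simp

/-- Value identity in the proof of Lemma 3.2 of Triple-GAN: if `μ` and `ν` are
probability measures with `lam`-densities `f` and `g`, then
`∫ f·log(f/(f+g)) + ∫ g·log(g/(f+g)) = −log 4 + 2·JSD(μ, ν)` (as a real number). -/
theorem triple_gan_value_eq_jsd {Ω : Type*} [MeasurableSpace Ω]
    (lam : Measure Ω) [SigmaFinite lam]
    (f g : Ω → ℝ) (hfm : Measurable f) (hgm : Measurable g)
    (hf0 : ∀ ω, 0 ≤ f ω) (hg0 : ∀ ω, 0 ≤ g ω)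
    (μ ν : Measure Ω) [IsProbabilityMeasure μ] [IsProbabilityMeasure ν]
    (hμ : μ = lam.withDensity fun ω => ENNReal.ofReal (f ω))
    (hν : ν = lam.withDensity fun ω => ENNReal.ofReal (g ω))
    (hint₁ : Integrable (fun ω => f ω * Real.log (f ω / (f ω + g ω))) lam)
    (hint₂ : Integrable (fun ω => g ω * Real.log (g ω / (f ω + g ω))) lam) :
    ∫ ω, f ω * Real.log (f ω / (f ω + g ω)) ∂lam +
        ∫ ω, g ω * Real.log (g ω / (f ω + g ω)) ∂lam =
      -Real.log 4 + 2 * (JSD μ ν).toReal := by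
  have h1 := klDiv_half_add_eq lam f g hfm hgm hf0 hg0 μ ν hμ hν hint₁
  have h2 := klDiv_half_add_eq lam g f hgm hfm hg0 hf0 ν μ hν hμ
    (by simpa only [add_comm (g _)] using hint₂)
  simp only [add_comm (g _), add_comm ν] at h2
  have h4 : Real.log 4 = 2 * Real.log 2 := by
    rw [show (4 : ℝ) = 2 ^ 2 by norm_num, Real.log_pow]
    norm_num
  rw [JSD, h1, h2, ← EReal.coe_mul, ← EReal.coe_mul, ← EReal.coe_add, EReal.toReal_coe, h4]
  ring
end

section
/- Let (Ω, 𝒜) be a measurable space, λ a σ-finite measure on Ω, and let P, P_g, P_c be probability measures on Ω with λ-densities f, p_g, p_c respectively. Let α ∈ (0,1) and set g := (1−α)·p_g + α·p_c (the density of the mixture p_α := (1−α)P_g + αP_c). Assume f·log(f/(f+g)) and g·log(g/(f+g)) are λ-integrable. Then V := ∫ f·log(f/(f+g)) dλ + ∫ g·log(g/(f+g)) dλ satisfies V ≥ −log 4, and V = −log 4 if and only if P = (1−α)P_g + αP_c. -/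
/-!
Writing `h(a, b) = a log (a/(a+b)) + b log (b/(a+b)) + (a+b) log 2`, the inequality
`log x ≥ 1 - 1/x` gives `a log (2a/(a+b)) ≥ (a-b)/2` for `a, b ≥ 0`, with equality only for `a = b`
(`half_sub_le_mul_log`, `eq_of_mul_log_le`). Adding the same bound with `a` and `b` exchanged,
`h ≥ 0`, with equality exactly on the diagonal. Since `f` and `g` are probability densities,
`V + log 4 = ∫ h(f, g) dλ ≥ 0`, and this vanishes iff `f = g` almost everywhere, that is, iff the
two measures with these densities agree.
-/

open MeasureTheory
open scoped ENNReal

/-- The tangent-line bound `log x ≥ 1 - 1/x` at `x = 2a/(a+b)`, scaled by `a`. -/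
lemma half_sub_le_mul_log {a b : ℝ} (ha : 0 ≤ a) (hb : 0 ≤ b) :
    (a - b) / 2 ≤ a * Real.log (a / (a + b)) + a * Real.log 2 := by
  rcases ha.eq_or_lt with rfl | ha
  · simp; linarith
  · have hab : 0 < a + b := by linarith
    have h := Real.one_sub_inv_le_log_of_pos (x := a / (a + b) * 2) (by positivity)
    rw [Real.log_mul (by positivity) (by norm_num)] at h
    have h2 := mul_le_mul_of_nonneg_left h ha.le
    have h3 : a * (1 - (a / (a + b) * 2)⁻¹) = (a - b) / 2 := by
      field_simp; ring
    linarith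

/-- Equality case of `half_sub_le_mul_log`. -/
lemma eq_of_mul_log_le {a b : ℝ} (ha : 0 ≤ a) (hb : 0 ≤ b)
    (h : a * Real.log (a / (a + b)) + a * Real.log 2 ≤ (a - b) / 2) : a = b := by
  rcases ha.eq_or_lt with rfl | ha
  · simp at h; linarith
  · by_contra hne
    have hab : 0 < a + b := by linarith
    have hx : (a / (a + b) * 2)⁻¹ ≠ 1 := by
      intro h1
      field_simp at h1
      exact hne (by linarith)
    have h1 := Real.log_lt_sub_one_of_pos (x := (a / (a + b) * 2)⁻¹) (by positivity) hx
    rw [Real.log_inv, Real.log_mul (by positivity) (by norm_num)] at h1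
    have h2 := mul_lt_mul_of_pos_left h1 ha
    have h3 : a * ((a / (a + b) * 2)⁻¹ - 1) = (b - a) / 2 := by
      field_simp; ring
    linarith

/-- A nonnegative density of a probability measure is integrable with integral `1`. -/
lemma integrable_and_integral_eq_one {Ω : Type*} [MeasurableSpace Ω] {lam P : Measure Ω}
    [IsProbabilityMeasure P] {f : Ω → ℝ} (hfm : Measurable f) (hf0 : ∀ ω, 0 ≤ f ω)
    (hP : P = lam.withDensity fun ω => ENNReal.ofReal (f ω)) :
    Integrable f lam ∧ ∫ ω, f ω ∂lam = 1 := by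
  have h1 : ∫⁻ ω, ENNReal.ofReal (f ω) ∂lam = 1 := by
    rw [← setLIntegral_univ, ← withDensity_apply _ MeasurableSet.univ, ← hP, measure_univ]
  refine ⟨⟨hfm.aestronglyMeasurable, ?_⟩, ?_⟩
  · rw [hasFiniteIntegral_iff_ofReal (ae_of_all _ hf0), h1]
    exact ENNReal.one_lt_top
  · rw [integral_eq_lintegral_of_nonneg_ae (ae_of_all _ hf0) hfm.aestronglyMeasurable, h1]
    simp

/-- Lemma 3.2 of Triple-GAN: with `f` the density of the data distribution `P` and
`g = (1-α)·p_g + α·p_c` the density of the mixture `(1-α)·P_g + α·P_c`, the value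
`V = ∫ f·log(f/(f+g)) + ∫ g·log(g/(f+g))` of the adversarial objective at the optimal
discriminator satisfies `V ≥ −log 4`, with equality iff `P = (1-α)·P_g + α·P_c`. -/
theorem triple_gan_value_min {Ω : Type*} [MeasurableSpace Ω]
    (lam : Measure Ω) [SigmaFinite lam]
    (f pg pc : Ω → ℝ)
    (hfm : Measurable f) (hpgm : Measurable pg) (hpcm : Measurable pc)
    (hf0 : ∀ ω, 0 ≤ f ω) (hpg0 : ∀ ω, 0 ≤ pg ω) (hpc0 : ∀ ω, 0 ≤ pc ω)
    (P Pg Pc : Measure Ω) [IsProbabilityMeasure P] [IsProbabilityMeasure Pg]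
    [IsProbabilityMeasure Pc]
    (hP : P = lam.withDensity fun ω => ENNReal.ofReal (f ω))
    (hPg : Pg = lam.withDensity fun ω => ENNReal.ofReal (pg ω))
    (hPc : Pc = lam.withDensity fun ω => ENNReal.ofReal (pc ω))
    (α : ℝ) (hα : α ∈ Set.Ioo (0 : ℝ) 1)
    (g : Ω → ℝ) (hg : ∀ ω, g ω = (1 - α) * pg ω + α * pc ω)
    (hint₁ : Integrable (fun ω => f ω * Real.log (f ω / (f ω + g ω))) lam)
    (hint₂ : Integrable (fun ω => g ω * Real.log (g ω / (f ω + g ω))) lam)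
    (V : ℝ)
    (hV : V = ∫ ω, f ω * Real.log (f ω / (f ω + g ω)) ∂lam +
        ∫ ω, g ω * Real.log (g ω / (f ω + g ω)) ∂lam) :
    -Real.log 4 ≤ V ∧
      (V = -Real.log 4 ↔ P = ENNReal.ofReal (1 - α) • Pg + ENNReal.ofReal α • Pc) := by
  obtain ⟨hα0, hα1⟩ := hα
  have hα1' : 0 ≤ 1 - α := by linarith
  have hg0 : ∀ ω, 0 ≤ g ω := fun ω => by
    rw [hg]
    exact add_nonneg (mul_nonneg hα1' (hpg0 ω)) (mul_nonneg hα0.le (hpc0 ω))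
  have hgeq : g = fun ω => (1 - α) * pg ω + α * pc ω := funext hg
  have hgm : Measurable g := by
    rw [hgeq]
    exact (hpgm.const_mul _).add (hpcm.const_mul _)
  obtain ⟨hfi, hf1⟩ := integrable_and_integral_eq_one hfm hf0 hP
  obtain ⟨hpgi, hpg1⟩ := integrable_and_integral_eq_one hpgm hpg0 hPg
  obtain ⟨hpci, hpc1⟩ := integrable_and_integral_eq_one hpcm hpc0 hPc
  have hgi : Integrable g lam := by
    rw [hgeq]
    exact (hpgi.const_mul _).add (hpci.const_mul _)
  have hg1 : ∫ ω, g ω ∂lam = 1 := by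
    rw [hgeq, integral_add (hpgi.const_mul _) (hpci.const_mul _), integral_const_mul,
      integral_const_mul, hpg1, hpc1]
    ring
  have hmix : ENNReal.ofReal (1 - α) • Pg + ENNReal.ofReal α • Pc
      = lam.withDensity fun ω => ENNReal.ofReal (g ω) := by
    rw [hPg, hPc, ← withDensity_smul _ hpgm.ennreal_ofReal, ← withDensity_smul _ hpcm.ennreal_ofReal,
      ← withDensity_add_left (hpgm.ennreal_ofReal.const_smul _)]
    congr 1
    funext ω
    simp only [Pi.add_apply, Pi.smul_apply, smul_eq_mul]
    rw [hg, ENNReal.ofReal_add (mul_nonneg hα1' (hpg0 ω)) (mul_nonneg hα0.le (hpc0 ω)),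
      ENNReal.ofReal_mul hα1', ENNReal.ofReal_mul hα0.le]
  have hlog4 : Real.log 4 = 2 * Real.log 2 := by
    rw [show (4 : ℝ) = 2 ^ 2 by norm_num, Real.log_pow]
    norm_num
  have hbf := fun ω => half_sub_le_mul_log (hf0 ω) (hg0 ω)
  have hbg := fun ω => half_sub_le_mul_log (hg0 ω) (hf0 ω)
  simp only [add_comm (g _) (f _)] at hbg
  -- The integrand of `V + log 4`, using `log 4 = 2 log 2` and that `f` and `g` integrate to `1`.
  set h : Ω → ℝ := fun ω =>
    (f ω * Real.log (f ω / (f ω + g ω)) + f ω * Real.log 2) +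
      (g ω * Real.log (g ω / (f ω + g ω)) + g ω * Real.log 2) with hh
  have hif := hint₁.add (hfi.mul_const (Real.log 2))
  have hig := hint₂.add (hgi.mul_const (Real.log 2))
  have hhi : Integrable h lam := hif.add hig
  have hhV : ∫ ω, h ω ∂lam = V + Real.log 4 := by
    have e1 := integral_add hint₁ (hfi.mul_const (Real.log 2))
    have e2 := integral_add hint₂ (hgi.mul_const (Real.log 2))
    have e3 := integral_add hif hig
    simp only [Pi.add_apply] at e3
    rw [integral_mul_const, hf1] at e1
    rw [integral_mul_const, hg1] at e2
    rw [hh, e3, e1, e2, hV, hlog4]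
    ring
  have hh0 : ∀ ω, 0 ≤ h ω := fun ω => by
    have h1 := hbf ω
    have h2 := hbg ω
    simp only [hh]
    linarith
  have hh_iff : ∀ ω, h ω = 0 ↔ f ω = g ω := fun ω => by
    constructor
    · intro h0
      refine eq_of_mul_log_le (hf0 ω) (hg0 ω) ?_
      have h2 := hbg ω
      simp only [hh] at h0
      linarith
    · intro hfg
      simp only [hh, ← hfg]
      rcases (hf0 ω).eq_or_lt with h0 | h0
      -- When `f ω = g ω = 0` the term is `0` because of the leading factors.
      · simp [← h0]
      · have : f ω / (f ω + f ω) = 2⁻¹ := by field_simp; norm_num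
        rw [this, Real.log_inv]
        ring
  have hV0 : 0 ≤ V + Real.log 4 := hhV ▸ integral_nonneg hh0
  refine ⟨by linarith, ?_⟩
  have hfin : ∫⁻ ω, ENNReal.ofReal (f ω) ∂lam ≠ ∞ := by
    rw [← ofReal_integral_eq_lintegral_ofReal hfi (ae_of_all _ hf0)]
    exact ENNReal.ofReal_ne_top
  rw [hmix, hP, withDensity_eq_iff hfm.ennreal_ofReal.aemeasurable
    hgm.ennreal_ofReal.aemeasurable hfin, eq_neg_iff_add_eq_zero, ← hhV,
    integral_eq_zero_iff_of_nonneg hh0 hhi]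
  refine Filter.eventually_congr (ae_of_all _ fun ω => ?_)
  rw [Pi.zero_apply, hh_iff, ENNReal.ofReal_eq_ofReal_iff (hf0 ω) (hg0 ω)]
end
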